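/- Every perfect Jacobson pair (A,I) is a left unique factorization pair: if F1(x), F2(x), G1(x), G2(x) ∈ A[x] are monic polynomials with F1(x)·F2(x) = G1(x)·G2(x), F1(x) − G1(x) ∈ I[x], F2(x) − G2(x) ∈ I[x], and the reductions F̄1(x), F̄2(x) ∈ (A/I)[x] are left coprime, then F1(x) = G1(x) and F2(x) = G2(x). -/

import Mathlib

open Polynomial

universe u

/-- A morphism of pairs `(A,I) → (B,J)`: a ring homomorphism `φ : A → B` with
`φ ⁻¹(J) = I`. -/
def IsPairHom {A B : Type*} [Ring A] [Ring B] (I : TwoSidedIdeal A)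
    (J : TwoSidedIdeal B) (φ : A →+* B) : Prop :=
  ∀ a : A, φ a ∈ J ↔ a ∈ I

/-- The commutator filtration of the pair `(A,I)`, indexed from `0`:
`commFilt I 0 = I^(1) = I` and `commFilt I (n+1) = I^(n+2)` is the two-sided ideal
generated by the commutators `[A, I^(n+1)]`. -/
def commFilt {A : Type*} [Ring A] (I : TwoSidedIdeal A) : ℕ → TwoSidedIdeal A
  | 0 => I
  | n + 1 => TwoSidedIdeal.span {x | ∃ a b : A, b ∈ commFilt I n ∧ x = a * b - b * a}

/-- A pair `(A,I)` is perfect if the intersection of its commutator filtration is `{0}`. -/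
def IsPerfectPair {A : Type*} [Ring A] (I : TwoSidedIdeal A) : Prop :=
  ∀ x : A, (∀ n, x ∈ commFilt I n) → x = 0

/-- A pair `(A,I)` is a Jacobson pair if `I` is contained in the Jacobson radical of `A`;
for a two-sided ideal this is equivalent to `1 + a` being a unit for every `a ∈ I`. -/
def IsJacobsonPair {A : Type*} [Ring A] (I : TwoSidedIdeal A) : Prop :=
  ∀ a ∈ I, IsUnit (1 + a)

/-- `f₁, f₂ ∈ A[x]` are left coprime: `A[x]f₁ + A[x]f₂ = A[x]`, equivalently there are
`g₁, g₂` with `g₁f₁ + g₂f₂ = 1`. -/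
def LeftCoprime {A : Type*} [Semiring A] (f1 f2 : A[X]) : Prop :=
  ∃ g1 g2 : A[X], g1 * f1 + g2 * f2 = 1

/-- A pair `(A,I)` is left Henselian: it is a Jacobson pair, and every factorization of
the reduction of a monic polynomial into left coprime monic factors lifts uniquely. -/
def IsLeftHenselianPair {A : Type*} [Ring A] (I : TwoSidedIdeal A) : Prop :=
  IsJacobsonPair I ∧
  ∀ F : A[X], F.Monic →
    ∀ f1 f2 : (I.ringCon.Quotient)[X], f1.Monic → f2.Monic → LeftCoprime f1 f2 →
      F.map (I.ringCon.mk') = f1 * f2 →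
      ∃! p : A[X] × A[X], p.1.Monic ∧ p.2.Monic ∧ F = p.1 * p.2 ∧
        p.1.map I.ringCon.mk' = f1 ∧ p.2.map I.ringCon.mk' = f2

/-- A ring homomorphism is local if it sends every nonunit to a nonunit. -/
def RingHomIsLocal {A B : Type*} [Ring A] [Ring B] (φ : A →+* B) : Prop :=
  ∀ a : A, ¬ IsUnit a → ¬ IsUnit (φ a)

/-- `φ : (A,I) → (H,J)` is a left Henselization of the perfect pair `(A,I)`:
`(H,J)` is a perfect left Henselian pair and every morphism of pairs from `(A,I)` to a
perfect left Henselian pair factors uniquely through `φ`. -/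
def IsLeftHenselization {A H : Type u} [Ring A] [Ring H] (I : TwoSidedIdeal A)
    (J : TwoSidedIdeal H) (φ : A →+* H) : Prop :=
  IsPairHom I J φ ∧ IsPerfectPair J ∧ IsLeftHenselianPair J ∧
  ∀ (B : Type u) (_ : Ring B) (K : TwoSidedIdeal B) (ψ0 : A →+* B),
    IsPairHom I K ψ0 → IsPerfectPair K → IsLeftHenselianPair K →
    ∃! ψ : H →+* B, IsPairHom J K ψ ∧ ψ0 = ψ.comp φ

/-!
Nakayama's lemma over the quotient of `A[X]` by the left ideal generated by `F₁` and `G₂`, which is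
finitely generated over `A` because `F₁` is monic, lifts the left coprimality of the reductions to
an identity `P * F₁ + Q * G₂ = 1` over `A`.

The differences `D₁ = F₁ - G₁` and `D₂ = F₂ - G₂` are then shown to have coefficients in `I^(n)` for
every `n`. If they have coefficients in `I^(n)`, they are central modulo `I^(n+1)`. There
`F₁ * F₂ = G₁ * G₂` reads `D₁ * G₂ = -D₂ * F₁`, so multiplying the coprimality identity by `D₁`
gives `D₁ = (P * D₁ - Q * D₂) * F₁`. As `D₁` has smaller degree than the monic `F₁`, it vanishes
modulo `I^(n+1)`, and so does `D₂`.
-/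

section Polynomial

variable {R S : Type*}

lemma eq_zero_of_degree_mul_lt_of_monic [Semiring R] {p q : R[X]} (hq : q.Monic)
    (h : (p * q).degree < q.degree) : p = 0 := by
  by_contra hp
  rw [hq.degree_mul, degree_eq_natDegree hp] at h
  exact h.not_ge (le_add_of_nonneg_left (Nat.cast_nonneg _))

lemma degree_map_eq_degree_map_of_monic [Semiring R] [Semiring S] {p q : R[X]} (hp : p.Monic)
    (hq : q.Monic) (h : p.degree = q.degree) (f : R →+* S) :
    (p.map f).degree = (q.map f).degree := by
  nontriviality S
  rw [hp.degree_map, hq.degree_map, h]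

lemma degree_eq_degree_of_monic_of_map_eq_map [Semiring R] [Semiring S] [Nontrivial S]
    {p q : R[X]} (hp : p.Monic) (hq : q.Monic) {f : R →+* S} (h : p.map f = q.map f) :
    p.degree = q.degree := by
  rw [← hp.degree_map f, h, hq.degree_map]

lemma mem_center_of_forall_coeff_mem_center [Semiring R] {p : R[X]}
    (hp : ∀ i, p.coeff i ∈ Subsemiring.center R) : p ∈ Subsemiring.center R[X] := by
  refine Subsemiring.mem_center_iff.2 fun q ↦ ?_
  ext n
  rw [coeff_mul, coeff_mul, ← Finset.Nat.sum_antidiagonal_swap]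
  exact Finset.sum_congr rfl fun ij _ ↦ Subsemiring.mem_center_iff.1 (hp ij.1) (q.coeff ij.2)

-- `divByMonic` divides with the quotient on the right, `p = q * s + r`; this is the other side.
lemma exists_eq_mul_add_degree_lt_of_monic [Ring R] [Nontrivial R] {q : R[X]} (hq : q.Monic)
    (p : R[X]) : ∃ s r : R[X], p = s * q + r ∧ r.degree < q.degree := by
  induction hn : p.degree using WellFoundedLT.induction generalizing p with
  | ind n ih =>
  subst hn
  rcases lt_or_ge p.degree q.degree with hlt | hle
  · exact ⟨0, p, by simp, hlt⟩
  have hp : p ≠ 0 := by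
    rintro rfl
    exact hq.ne_zero (degree_eq_bot.1 (le_bot_iff.1 hle))
  set t : R[X] := C p.leadingCoeff * X ^ (p.natDegree - q.natDegree)
  have degree_eq : p.degree = (t * q).degree := by
    rw [hq.degree_mul, degree_C_mul_X_pow _ (leadingCoeff_ne_zero.2 hp), degree_eq_natDegree hp,
      degree_eq_natDegree hq.ne_zero, ← Nat.cast_add,
      Nat.sub_add_cancel (natDegree_le_natDegree hle)]
  have leadingCoeff_eq : p.leadingCoeff = (t * q).leadingCoeff := by
    rw [leadingCoeff_mul_monic hq, leadingCoeff_C_mul_X_pow]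
  obtain ⟨s, r, hsr, hr⟩ := ih _ (degree_sub_lt_left degree_eq hp leadingCoeff_eq) _ rfl
  exact ⟨s + t, r, by rw [add_mul, add_right_comm, ← hsr, sub_add_cancel], hr⟩

end Polynomial

section Nakayama

variable {R S M : Type*} [Ring R] [Ring S]

lemma finite_quotient_of_monic_mem {L : Ideal R[X]} {q : R[X]} (hq : q.Monic) (hqL : q ∈ L) :
    Module.Finite R (R[X] ⧸ L) := by
  classical
  nontriviality R
  have : Module.Finite R (degreeLT R q.natDegree) :=
    .of_fg ⟨_, degreeLT_eq_span_X_pow.symm⟩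
  refine .of_surjective ((L.mkQ.restrictScalars R).domRestrict (degreeLT R q.natDegree)) ?_
  refine L.mkQ_surjective.forall.2 fun p ↦ ?_
  obtain ⟨s, r, rfl, hr⟩ := exists_eq_mul_add_degree_lt_of_monic hq p
  refine ⟨⟨r, mem_degreeLT.2 (hr.trans_le degree_le_natDegree)⟩, ?_⟩
  have mk_mul_eq_zero : L.mkQ (s * q) = 0 :=
    (Submodule.Quotient.mk_eq_zero L).2 (L.mul_mem_left s hqL)
  rw [map_add, mk_mul_eq_zero, zero_add]
  rfl

lemma apply_mem_smul_top_of_forall_coeff_mem [AddCommGroup M] [Module R M] {J : Ideal R}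
    {p : R[X]} (hp : ∀ i, p.coeff i ∈ J) (φ : R[X] →ₗ[R] M) :
    φ p ∈ J • (⊤ : Submodule R M) := by
  rw [p.as_sum_support, map_sum]
  refine Submodule.sum_mem _ fun i _ ↦ ?_
  rw [← smul_X_eq_monomial, map_smul]
  exact Submodule.smul_mem_smul (hp i) Submodule.mem_top

lemma eq_top_of_monic_mem_of_map_eq_one {f : R →+* S} (hker : RingHom.ker f ≤ Ring.jacobson R)
    {L : Ideal R[X]} {p q : R[X]} (hq : q.Monic) (hqL : q ∈ L) (hpL : p ∈ L)
    (hp : p.map f = 1) : L = ⊤ := by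
  have := finite_quotient_of_monic_mem hq hqL
  have mk_mem (r : R[X]) : L.mkQ r ∈ Ring.jacobson R • (⊤ : Submodule R (R[X] ⧸ L)) := by
    have mk_eq : L.mkQ r = L.mkQ (r * (1 - p)) := by
      rw [← sub_eq_zero, ← map_sub, mul_one_sub, sub_sub_cancel]
      exact (Submodule.Quotient.mk_eq_zero L).2 (L.mul_mem_left r hpL)
    have coeff_mem (i : ℕ) : (r * (1 - p)).coeff i ∈ Ring.jacobson R := by
      apply hker
      rw [RingHom.mem_ker, ← coeff_map, Polynomial.map_mul, Polynomial.map_sub, hp,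
        Polynomial.map_one, sub_self, mul_zero, coeff_zero]
    rw [mk_eq]
    exact apply_mem_smul_top_of_forall_coeff_mem coeff_mem (L.mkQ.restrictScalars R)
  have top_eq_bot : (⊤ : Submodule R (R[X] ⧸ L)) = ⊥ :=
    Module.Finite.fg_top.eq_bot_of_le_jacobson_smul fun x _ ↦
      L.mkQ_surjective.forall.2 mk_mem x
  have mk_one_eq_zero : L.mkQ 1 = 0 :=
    (Submodule.mem_bot R).1 (top_eq_bot ▸ Submodule.mem_top)
  exact (Ideal.eq_top_iff_one L).2 ((Submodule.Quotient.mk_eq_zero L).1 mk_one_eq_zero)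

lemma LeftCoprime.of_map {f : R →+* S} (hf : Function.Surjective f)
    (hker : RingHom.ker f ≤ Ring.jacobson R) {p q : R[X]} (hp : p.Monic)
    (h : LeftCoprime (p.map f) (q.map f)) : LeftCoprime p q := by
  obtain ⟨a, b, hab⟩ := h
  obtain ⟨a, rfl⟩ := map_surjective f hf a
  obtain ⟨b, rfl⟩ := map_surjective f hf b
  have p_mem : p ∈ Ideal.span {p, q} := Ideal.subset_span (by simp)
  have comb_mem : a * p + b * q ∈ Ideal.span {p, q} := Ideal.mem_span_pair.2 ⟨a, b, rfl⟩
  have span_eq_top : Ideal.span {p, q} = ⊤ :=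
    eq_top_of_monic_mem_of_map_eq_one hker hp p_mem comb_mem (by simpa using hab)
  exact Ideal.mem_span_pair.1 ((Ideal.eq_top_iff_one _).1 span_eq_top)

end Nakayama

lemma LeftCoprime.map {R S : Type*} [Semiring R] [Semiring S] {p q : R[X]} (h : LeftCoprime p q)
    (f : R →+* S) : LeftCoprime (p.map f) (q.map f) := by
  obtain ⟨a, b, hab⟩ := h
  refine ⟨a.map f, b.map f, ?_⟩
  rw [← Polynomial.map_mul, ← Polynomial.map_mul, ← Polynomial.map_add, hab, Polynomial.map_one]

lemma eq_and_eq_of_mul_eq_mul_of_sub_mem_center {R : Type*} [Ring R] {F₁ F₂ G₁ G₂ : R[X]}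
    (hF₁ : F₁.Monic) (hG₁ : G₁.Monic) (hdeg : F₁.degree = G₁.degree)
    (h₁ : F₁ - G₁ ∈ Subsemiring.center R[X]) (h₂ : F₂ - G₂ ∈ Subsemiring.center R[X])
    (hmul : F₁ * F₂ = G₁ * G₂) (hcop : LeftCoprime F₁ G₂) : F₁ = G₁ ∧ F₂ = G₂ := by
  nontriviality R
  obtain ⟨P, Q, hPQ⟩ := hcop
  rw [Subsemiring.mem_center_iff] at h₁ h₂
  have sub_mul_eq : (F₁ - G₁) * G₂ = -((F₂ - G₂) * F₁) := by
    rw [← h₂, sub_mul, mul_sub, hmul, neg_sub]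
  have sub_eq_mul : F₁ - G₁ = (P * (F₁ - G₁) - Q * (F₂ - G₂)) * F₁ :=
    calc F₁ - G₁ = (F₁ - G₁) * P * F₁ + (F₁ - G₁) * Q * G₂ := by
          rw [mul_assoc, mul_assoc, ← mul_add, hPQ, mul_one]
      _ = P * (F₁ - G₁) * F₁ + Q * ((F₁ - G₁) * G₂) := by rw [← h₁ P, ← h₁ Q, mul_assoc Q]
      _ = (P * (F₁ - G₁) - Q * (F₂ - G₂)) * F₁ := by rw [sub_mul_eq]; noncomm_ring
  have degree_lt : (F₁ - G₁).degree < F₁.degree :=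
    degree_sub_lt_left hdeg hF₁.ne_zero (hF₁.leadingCoeff.trans hG₁.leadingCoeff.symm)
  have first_eq : F₁ = G₁ := by
    rw [sub_eq_mul] at degree_lt
    rw [eq_zero_of_degree_mul_lt_of_monic hF₁ degree_lt, zero_mul] at sub_eq_mul
    exact sub_eq_zero.1 sub_eq_mul
  refine ⟨first_eq, hF₁.isRegular.left ?_⟩
  rwa [← first_eq] at hmul

section Pair

variable {A : Type*} [Ring A] {I : TwoSidedIdeal A}

lemma ringCon_mk'_eq_zero_iff {a : A} : I.ringCon.mk' a = 0 ↔ a ∈ I := by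
  rw [← TwoSidedIdeal.mem_ker, TwoSidedIdeal.ker_ringCon_mk']

lemma map_ringCon_mk'_eq_map_iff {p q : A[X]} :
    p.map I.ringCon.mk' = q.map I.ringCon.mk' ↔ ∀ i, (p - q).coeff i ∈ I := by
  rw [← sub_eq_zero, ← Polynomial.map_sub, Polynomial.ext_iff]
  simp only [coeff_map, coeff_zero, ringCon_mk'_eq_zero_iff]

lemma IsJacobsonPair.ker_ringCon_mk'_le_jacobson (hI : IsJacobsonPair I) :
    RingHom.ker I.ringCon.mk' ≤ Ring.jacobson A := by
  intro x hx
  rw [RingHom.mem_ker, ringCon_mk'_eq_zero_iff] at hx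
  rw [← Ideal.jacobson_bot, Ideal.mem_jacobson_iff]
  intro y
  obtain ⟨z, hz⟩ := (hI (y * x) (I.mul_mem_left y x hx)).exists_left_inv
  refine ⟨z, ?_⟩
  rw [Ideal.mem_bot, sub_eq_zero, ← hz, mul_add, mul_one, mul_assoc, add_comm]

lemma IsJacobsonPair.nontrivial_quotient [Nontrivial A] (hI : IsJacobsonPair I) :
    Nontrivial I.ringCon.Quotient := by
  refine nontrivial_of_ne (I.ringCon.mk' 1) 0 fun h ↦ ?_
  have neg_one_mem : (-1 : A) ∈ I := I.neg_mem (ringCon_mk'_eq_zero_iff.1 h)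
  simpa using hI (-1) neg_one_mem

lemma mk'_commFilt_succ_mem_center {n : ℕ} {b : A} (hb : b ∈ commFilt I n) :
    (commFilt I (n + 1)).ringCon.mk' b ∈
      Subsemiring.center (commFilt I (n + 1)).ringCon.Quotient := by
  refine Subsemiring.mem_center_iff.2 <| (RingCon.mk'_surjective _).forall.2 fun a ↦ ?_
  have commutator_mem : a * b - b * a ∈ commFilt I (n + 1) :=
    TwoSidedIdeal.subset_span ⟨a, b, hb, rfl⟩
  simpa [sub_eq_zero] using ringCon_mk'_eq_zero_iff.2 commutator_mem

lemma map_sub_map_mem_center_of_map_commFilt_eq {n : ℕ} {p q : A[X]}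
    (h : p.map (commFilt I n).ringCon.mk' = q.map (commFilt I n).ringCon.mk') :
    p.map (commFilt I (n + 1)).ringCon.mk' - q.map (commFilt I (n + 1)).ringCon.mk' ∈
      Subsemiring.center (commFilt I (n + 1)).ringCon.Quotient[X] := by
  rw [← Polynomial.map_sub]
  refine mem_center_of_forall_coeff_mem_center fun i ↦ ?_
  rw [coeff_map]
  exact mk'_commFilt_succ_mem_center (map_ringCon_mk'_eq_map_iff.1 h i)

lemma map_commFilt_eq_of_leftCoprime {F₁ F₂ G₁ G₂ : A[X]} (hF₁ : F₁.Monic) (hG₁ : G₁.Monic)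
    (hdeg : F₁.degree = G₁.degree) (hmul : F₁ * F₂ = G₁ * G₂) (hcop : LeftCoprime F₁ G₂)
    (h₁ : F₁.map I.ringCon.mk' = G₁.map I.ringCon.mk')
    (h₂ : F₂.map I.ringCon.mk' = G₂.map I.ringCon.mk') (n : ℕ) :
    F₁.map (commFilt I n).ringCon.mk' = G₁.map (commFilt I n).ringCon.mk' ∧
      F₂.map (commFilt I n).ringCon.mk' = G₂.map (commFilt I n).ringCon.mk' := by
  induction n with
  | zero => exact ⟨h₁, h₂⟩
  | succ n ih =>
    refine eq_and_eq_of_mul_eq_mul_of_sub_mem_center (hF₁.map _) (hG₁.map _)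
      (degree_map_eq_degree_map_of_monic hF₁ hG₁ hdeg _)
      (map_sub_map_mem_center_of_map_commFilt_eq ih.1)
      (map_sub_map_mem_center_of_map_commFilt_eq ih.2) ?_ (hcop.map _)
    rw [← Polynomial.map_mul, ← Polynomial.map_mul, hmul]

lemma IsPerfectPair.eq_of_forall_map_commFilt_eq (hI : IsPerfectPair I) {p q : A[X]}
    (h : ∀ n, p.map (commFilt I n).ringCon.mk' = q.map (commFilt I n).ringCon.mk') : p = q := by
  refine sub_eq_zero.1 (Polynomial.ext fun i ↦ hI _ fun n ↦ ?_)
  exact map_ringCon_mk'_eq_map_iff.1 (h n) i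

end Pair

theorem perfect_jacobson_LUFP_general {A : Type*} [Ring A] (I : TwoSidedIdeal A)
    (hperf : IsPerfectPair I) (hJac : IsJacobsonPair I)
    (F1 F2 G1 G2 : A[X]) (hF1 : F1.Monic) (hG1 : G1.Monic)
    (heq : F1 * F2 = G1 * G2)
    (hd1 : ∀ i, (F1 - G1).coeff i ∈ I) (hd2 : ∀ i, (F2 - G2).coeff i ∈ I)
    (hcop : LeftCoprime (F1.map I.ringCon.mk') (F2.map I.ringCon.mk')) :
    F1 = G1 ∧ F2 = G2 := by
  nontriviality A
  have := hJac.nontrivial_quotient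
  have map_eq₁ := map_ringCon_mk'_eq_map_iff.2 hd1
  have map_eq₂ := map_ringCon_mk'_eq_map_iff.2 hd2
  have degree_eq : F1.degree = G1.degree :=
    degree_eq_degree_of_monic_of_map_eq_map hF1 hG1 map_eq₁
  have coprime : LeftCoprime F1 G2 :=
    .of_map (RingCon.mk'_surjective _) hJac.ker_ringCon_mk'_le_jacobson hF1 (map_eq₂ ▸ hcop)
  have map_commFilt_eq :=
    map_commFilt_eq_of_leftCoprime hF1 hG1 degree_eq heq coprime map_eq₁ map_eq₂
  exact ⟨hperf.eq_of_forall_map_commFilt_eq fun n ↦ (map_commFilt_eq n).1,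
    hperf.eq_of_forall_map_commFilt_eq fun n ↦ (map_commFilt_eq n).2⟩

/-- Proposition `uniquenesslifting`: every perfect Jacobson pair is a left
unique factorization pair. -/
theorem perfect_jacobson_LUFP {A : Type*} [Ring A] (I : TwoSidedIdeal A)
    (hperf : IsPerfectPair I) (hJac : IsJacobsonPair I)
    (F1 F2 G1 G2 : A[X])
    (hF1 : F1.Monic) (hF2 : F2.Monic) (hG1 : G1.Monic) (hG2 : G2.Monic)
    (heq : F1 * F2 = G1 * G2)
    (hd1 : ∀ i, (F1 - G1).coeff i ∈ I) (hd2 : ∀ i, (F2 - G2).coeff i ∈ I)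
    (hcop : LeftCoprime (F1.map I.ringCon.mk') (F2.map I.ringCon.mk')) :
    F1 = G1 ∧ F2 = G2 :=
  perfect_jacobson_LUFP_general I hperf hJac F1 F2 G1 G2 hF1 hG1 heq hd1 hd2 hcop
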